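/- Let −1 < β < 0 and ν > −1/2. Then sup_{x > 0} { ( e^{−βx} K_{ν+2}(x) / x^{ν−1} ) · ∫_0^x e^{βt} t^ν I_ν(t) dt } ≥ max{ 1/(2(1+β)) , 2(ν+1)/(2ν+1) }. -/

import Mathlib

open Real MeasureTheory

/-- Modified Bessel function of the first kind, `I_ν(x) = ∑_{k} (x/2)^{ν+2k} / (Γ(ν+k+1) k!)`. -/
noncomputable def besselI (ν x : ℝ) : ℝ :=
  ∑' k : ℕ, (x / 2) ^ (ν + 2 * (k : ℝ)) / (Real.Gamma (ν + (k : ℝ) + 1) * (Nat.factorial k : ℝ))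

/-- Modified Bessel function of the second kind, `K_ν(x) = ∫_0^∞ e^{-x cosh t} cosh(ν t) dt`. -/
noncomputable def besselK (ν x : ℝ) : ℝ :=
  ∫ t in Set.Ioi (0 : ℝ), Real.exp (-x * Real.cosh t) * Real.cosh (ν * t)

/-- Lower incomplete gamma function `γ(a, x) = ∫_0^x t^{a-1} e^{-t} dt`. -/
noncomputable def lowerIncGamma (a x : ℝ) : ℝ :=
  ∫ t in (0 : ℝ)..x, t ^ (a - 1) * Real.exp (-t)


section Helpers
open Filter Topology Set

/-- The weight in the integral representation. -/
noncomputable def wgt (a u : ℝ) : ℝ := u ^ (-(1/2) : ℝ) * (1 - u) ^ (a - 1)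

/-- The integral in the representation of the function `besselI`. -/
noncomputable def MM (a t : ℝ) : ℝ := ∫ u in Ioo (0:ℝ) 1, wgt a u * Real.cosh (t * √u)

lemma beta_int (p q : ℝ) (hp : 0 < p) (hq : 0 < q) :
    IntegrableOn (fun u : ℝ => u ^ (p - 1) * (1 - u) ^ (q - 1)) (Ioo 0 1) ∧
    ∫ u in Ioo (0:ℝ) 1, u ^ (p - 1) * (1 - u) ^ (q - 1) =
      Real.Gamma p * Real.Gamma q / Real.Gamma (p + q) := by
  have hc : IntegrableOn (fun x : ℝ => (x:ℂ) ^ ((p:ℂ) - 1) * (1 - (x:ℂ)) ^ ((q:ℂ) - 1)) (Ioc 0 1) := by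
    have := Complex.betaIntegral_convergent (u := p) (v := q) (by simpa) (by simpa)
    rwa [intervalIntegrable_iff_integrableOn_Ioc_of_le (by simp)] at this
  have heq : ∀ x ∈ Ioc (0:ℝ) 1, RCLike.re ((x:ℂ) ^ ((p:ℂ) - 1) * (1 - (x:ℂ)) ^ ((q:ℂ) - 1)) =
      x ^ (p - 1) * (1 - x) ^ (q - 1) := by
    rintro x ⟨hx1, hx2⟩
    norm_cast
    rw [← Complex.ofReal_cpow, ← Complex.ofReal_cpow, RCLike.re_to_complex,
        Complex.re_mul_ofReal, Complex.ofReal_re]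
    all_goals linarith
  have hr : IntegrableOn (fun u : ℝ => u ^ (p - 1) * (1 - u) ^ (q - 1)) (Ioc 0 1) := by
    refine IntegrableOn.congr_fun (Integrable.re hc) heq measurableSet_Ioc
  refine ⟨hr.mono_set Ioo_subset_Ioc_self, ?_⟩
  have := ProbabilityTheory.beta_eq_betaIntegralReal p q hp hq
  rw [ProbabilityTheory.beta] at this
  rw [this, Complex.betaIntegral, intervalIntegral.integral_of_le (by norm_num),
      ← integral_Ioc_eq_integral_Ioo, ← RCLike.re_to_complex, ← integral_re hc]
  exact (setIntegral_congr_fun measurableSet_Ioc heq).symm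

lemma wgt_nonneg (a : ℝ) {u : ℝ} (hu : u ∈ Ioo (0:ℝ) 1) : 0 ≤ wgt a u := by
  have := hu.1; have := hu.2
  unfold wgt
  have : 0 < 1 - u := by linarith
  positivity

lemma wgt_meas (a : ℝ) : Measurable (wgt a) := by unfold wgt; fun_prop

lemma wgt_int {a : ℝ} (ha : 0 < a) : IntegrableOn (wgt a) (Ioo 0 1) := by
  have := (beta_int (1/2) a (by norm_num) ha).1
  unfold wgt; norm_num at this ⊢; exact this

lemma cosh_sq_le {t u : ℝ} (hu : u ∈ Ioo (0:ℝ) 1) : Real.cosh (t * √u) ≤ Real.cosh t := by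
  rw [Real.cosh_le_cosh, abs_mul, abs_of_nonneg (Real.sqrt_nonneg u)]
  have : √u ≤ 1 := Real.sqrt_le_one.2 hu.2.le
  nlinarith [abs_nonneg t]

lemma MM_integrable {a : ℝ} (ha : 0 < a) (t : ℝ) :
    IntegrableOn (fun u => wgt a u * Real.cosh (t * √u)) (Ioo 0 1) := by
  refine Integrable.mono' ((wgt_int ha).mul_const (Real.cosh t)) ?_ ?_
  · have := wgt_meas a
    exact Measurable.aestronglyMeasurable (by fun_prop)
  · filter_upwards [ae_restrict_mem measurableSet_Ioo] with u hu
    rw [Real.norm_of_nonneg (mul_nonneg (wgt_nonneg a hu) (Real.cosh_pos _).le)]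
    exact mul_le_mul_of_nonneg_left (cosh_sq_le hu) (wgt_nonneg a hu)

lemma MM_nonneg (a t : ℝ) : 0 ≤ MM a t :=
  setIntegral_nonneg measurableSet_Ioo fun u hu => mul_nonneg (wgt_nonneg a hu) (Real.cosh_pos _).le

lemma MM_zero {a : ℝ} (ha : 0 < a) : MM a 0 = √π * Real.Gamma a / Real.Gamma (1/2 + a) := by
  have := (beta_int (1/2) a (by norm_num) ha).2
  rw [Real.Gamma_one_half_eq] at this
  rw [← this]
  unfold MM wgt; norm_num

lemma MM_le {a : ℝ} (ha : 0 < a) {t : ℝ} (ht : 0 ≤ t) : MM a t ≤ MM a 0 * Real.exp t := by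
  have h1 : MM a t ≤ ∫ u in Ioo (0:ℝ) 1, wgt a u * Real.cosh t := by
    refine setIntegral_mono_on (MM_integrable ha t) ((wgt_int ha).mul_const _) measurableSet_Ioo ?_
    intro u hu
    exact mul_le_mul_of_nonneg_left (cosh_sq_le hu) (wgt_nonneg a hu)
  rw [integral_mul_const] at h1
  have h2 : MM a 0 = ∫ u in Ioo (0:ℝ) 1, wgt a u := by simp [MM]
  rw [← h2] at h1
  refine h1.trans (mul_le_mul_of_nonneg_left ?_ (MM_nonneg a 0))
  rw [Real.cosh_eq]
  have : Real.exp (-t) ≤ Real.exp t := Real.exp_le_exp.2 (by linarith)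
  linarith

lemma MM_cont {a : ℝ} (ha : 0 < a) : Continuous (MM a) := by
  rw [continuous_iff_continuousAt]
  intro t0
  unfold MM
  refine tendsto_integral_filter_of_dominated_convergence
    (fun u => wgt a u * Real.cosh (|t0| + 1)) ?_ ?_ ((wgt_int ha).mul_const _) ?_
  · filter_upwards with t
    exact (MM_integrable ha t).aestronglyMeasurable
  · have : ∀ᶠ t in 𝓝 t0, |t| < |t0| + 1 := by
      refine (continuous_abs.tendsto t0).eventually_lt_const (by linarith)
    filter_upwards [this] with t ht
    filter_upwards [ae_restrict_mem measurableSet_Ioo] with u hu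
    rw [Real.norm_of_nonneg (mul_nonneg (wgt_nonneg a hu) (Real.cosh_pos _).le)]
    refine mul_le_mul_of_nonneg_left ((cosh_sq_le hu).trans ?_) (wgt_nonneg a hu)
    rw [Real.cosh_le_cosh]
    exact ht.le.trans (le_abs_self _)
  · filter_upwards with u
    have : Continuous (fun t => wgt a u * Real.cosh (t * √u)) := by
      have := Real.continuous_cosh
      fun_prop
    exact this.tendsto t0

lemma Gamma_half_nat (k : ℕ) :
    Real.Gamma (k + 1/2) * (k.factorial : ℝ) * 4 ^ k = ((2 * k).factorial : ℝ) * √π := by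
  have h := Real.Gamma_mul_Gamma_add_half ((k:ℝ) + 1/2)
  have e1 : (k:ℝ) + 1/2 + 1/2 = k + 1 := by ring
  have e2 : 2 * ((k:ℝ) + 1/2) = ((2 * k : ℕ) : ℝ) + 1 := by push_cast; ring
  have e3 : (1:ℝ) - 2 * ((k:ℝ) + 1/2) = -((2 * k : ℕ) : ℝ) := by push_cast; ring
  rw [e1, e3, e2, Real.Gamma_nat_eq_factorial, Real.Gamma_nat_eq_factorial,
    Real.rpow_neg (by norm_num), Real.rpow_natCast, pow_mul] at h
  rw [h]
  norm_num
  field_simp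

lemma besselI_eq {ν : ℝ} (hν : -(1/2) < ν) {t : ℝ} (ht : 0 < t) :
    besselI ν t = (t / 2) ^ ν / (√π * Real.Gamma (ν + 1/2)) * MM (ν + 1/2) t := by
  have ha : 0 < ν + 1/2 := by linarith
  set a := ν + 1/2 with hadef
  have hs : HasSum (fun k : ℕ => ∫ u in Ioo (0:ℝ) 1, wgt a u * ((t * √u) ^ (2*k) / ((2*k).factorial : ℝ)))
      (MM a t) := by
    refine hasSum_integral_of_dominated_convergence
      (fun k u => wgt a u * (t ^ (2*k) / ((2*k).factorial : ℝ))) ?_ ?_ ?_ ?_ ?_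
    · intro k
      have := wgt_meas a
      exact Measurable.aestronglyMeasurable (by fun_prop)
    · intro k
      filter_upwards [ae_restrict_mem measurableSet_Ioo] with u hu
      rw [Real.norm_of_nonneg (mul_nonneg (wgt_nonneg a hu) (by positivity))]
      refine mul_le_mul_of_nonneg_left ?_ (wgt_nonneg a hu)
      have : √u ≤ 1 := Real.sqrt_le_one.2 hu.2.le
      have : t * √u ≤ t := by nlinarith
      gcongr
    · filter_upwards with u
      exact (Real.hasSum_cosh t).summable.mul_left _
    · have : (fun u => ∑' k : ℕ, wgt a u * (t ^ (2*k) / ((2*k).factorial : ℝ)))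
        = fun u => wgt a u * Real.cosh t := by
        funext u
        rw [tsum_mul_left, (Real.hasSum_cosh t).tsum_eq]
      rw [this]
      exact (wgt_int ha).mul_const _
    · filter_upwards with u
      exact (Real.hasSum_cosh _).mul_left _
  have hG := Real.Gamma_pos_of_pos ha
  have hpi : 0 < √π := Real.sqrt_pos.2 Real.pi_pos
  have hterm : ∀ k : ℕ, (t / 2) ^ (ν + 2 * (k : ℝ)) / (Real.Gamma (ν + (k : ℝ) + 1) * (Nat.factorial k : ℝ)) =
     (t / 2) ^ ν / (√π * Real.Gamma a) *
      ∫ u in Ioo (0:ℝ) 1, wgt a u * ((t * √u) ^ (2*k) / ((2*k).factorial : ℝ)) := by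
    intro k
    have hk : (0:ℝ) < k + 1/2 := by positivity
    have h1 : ∫ u in Ioo (0:ℝ) 1, wgt a u * ((t * √u) ^ (2*k) / ((2*k).factorial : ℝ)) =
      (t ^ (2*k) / ((2*k).factorial : ℝ)) * ∫ u in Ioo (0:ℝ) 1, u ^ ((k:ℝ) + 1/2 - 1) * (1 - u) ^ (a - 1) := by
      rw [← integral_const_mul]
      refine setIntegral_congr_fun measurableSet_Ioo fun u hu => ?_
      have : u ^ ((k:ℝ) + 1/2 - 1) = u ^ (-(1/2) : ℝ) * u ^ k := by
        rw [← Real.rpow_natCast u k, ← Real.rpow_add hu.1]; congr 1; ring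
      simp only [this, wgt]
      rw [mul_pow, pow_mul (√u), Real.sq_sqrt hu.1.le]
      ring
    rw [h1, (beta_int _ a hk ha).2]
    have e : (k:ℝ) + 1/2 + a = ν + k + 1 := by rw [hadef]; ring
    rw [e, Real.rpow_add (by positivity)]
    have e2 : (t / 2) ^ (2 * (k:ℝ)) = t ^ (2*k) / 4 ^ k := by
      have : (2 * (k:ℝ)) = ((2*k : ℕ) : ℝ) := by push_cast; ring
      rw [this, Real.rpow_natCast, div_pow, pow_mul 2]; norm_num
    rw [e2]
    have hg := Gamma_half_nat k
    have hG2 : 0 < Real.Gamma (ν + k + 1) := Real.Gamma_pos_of_pos (by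
      have : (0:ℝ) ≤ k := by positivity
      linarith)
    have hf : (0:ℝ) < (2*k).factorial := by positivity
    have hf2 : (0:ℝ) < k.factorial := by positivity
    have : Real.Gamma (k + 1/2) = ((2 * k).factorial : ℝ) * √π / ((k.factorial : ℝ) * 4 ^ k) := by
      rw [← hg]; field_simp
    rw [this]
    field_simp
  unfold besselI
  simp_rw [hterm]
  rw [tsum_mul_left, hs.tsum_eq]

end Helpers

section Helpers2
open Filter Topology Set

lemma image_sq : (fun r : ℝ => (1 - r) ^ 2) '' Ioo 0 1 = Ioo 0 1 := by
  ext u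
  constructor
  · rintro ⟨r, ⟨h0, h1⟩, rfl⟩
    constructor
    · have : 0 < 1 - r := by linarith
      positivity
    · nlinarith
  · rintro ⟨h0, h1⟩
    refine ⟨1 - √u, ⟨?_, ?_⟩, ?_⟩
    · have : √u < 1 := by rw [Real.sqrt_lt' one_pos]; simpa using h1
      linarith
    · have := Real.sqrt_pos.2 h0
      linarith
    · simp [Real.sq_sqrt h0.le]

lemma injOn_sq : InjOn (fun r : ℝ => (1 - r) ^ 2) (Ioo 0 1) := by
  rintro r ⟨h0, h1⟩ s ⟨k0, k1⟩ h
  have h' : (1 - r) ^ 2 = (1 - s) ^ 2 := h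
  have := (sq_eq_sq₀ (by linarith : (0:ℝ) ≤ 1 - r) (by linarith)).1 h'
  linarith

lemma deriv_sq' (r : ℝ) : HasDerivWithinAt (fun r : ℝ => (1 - r) ^ 2) (-2 * (1 - r)) (Ioo 0 1) r := by
  have h := ((hasDerivAt_id r).const_sub 1).pow 2
  refine (h.congr_deriv ?_).hasDerivWithinAt
  simp

lemma wgt_sq (a : ℝ) {r : ℝ} (hr : r ∈ Ioo (0:ℝ) 1) :
    |(-2 * (1 - r))| * wgt a ((1 - r) ^ 2) = 2 * (r ^ (a - 1) * (2 - r) ^ (a - 1)) := by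
  obtain ⟨h0, h1⟩ := hr
  have hp : 0 < 1 - r := by linarith
  rw [abs_mul, abs_of_pos hp]
  unfold wgt
  rw [← Real.rpow_natCast (1 - r) 2, ← Real.rpow_mul hp.le]
  have e : 1 - (1 - r) ^ ((2:ℕ):ℝ) = r * (2 - r) := by rw [Real.rpow_natCast]; ring
  rw [e, Real.mul_rpow h0.le (by linarith)]
  norm_num
  rw [Real.rpow_neg_one]
  field_simp

lemma V_int {a : ℝ} (ha : 0 < a) :
    IntegrableOn (fun r : ℝ => r ^ (a - 1) * (2 - r) ^ (a - 1)) (Ioo 0 1) := by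
  have h := wgt_int ha
  rw [← image_sq, integrableOn_image_iff_integrableOn_abs_deriv_smul measurableSet_Ioo
    (fun r _ => deriv_sq' r) injOn_sq] at h
  have h2 : IntegrableOn (fun r : ℝ => 2 * (r ^ (a - 1) * (2 - r) ^ (a - 1))) (Ioo 0 1) :=
    IntegrableOn.congr_fun h (fun r hr => by
      simp only [smul_eq_mul]; exact wgt_sq a hr) measurableSet_Ioo
  refine IntegrableOn.congr_fun (h2.const_mul (1/2)) (fun r hr => ?_) measurableSet_Ioo
  ring

lemma V_exp_int {a : ℝ} (ha : 0 < a) (f : ℝ → ℝ) (hf : Measurable f)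
    (hb : ∀ r ∈ Ioo (0:ℝ) 1, |f r| ≤ 1) :
    IntegrableOn (fun r : ℝ => (r ^ (a - 1) * (2 - r) ^ (a - 1)) * f r) (Ioo 0 1) := by
  refine Integrable.mono' (V_int ha) (Measurable.aestronglyMeasurable (by fun_prop)) ?_
  filter_upwards [ae_restrict_mem measurableSet_Ioo] with r hr
  have h0 := hr.1
  have h2 : 0 < 2 - r := by linarith [hr.2]
  rw [norm_mul, Real.norm_of_nonneg (by positivity)]
  exact mul_le_of_le_one_right (by positivity) (hb r hr)

lemma MM_eq {a : ℝ} (ha : 0 < a) {t : ℝ} (ht : 0 ≤ t) :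
    MM a t * Real.exp (-t) =
      (∫ r in Ioo (0:ℝ) 1, (r ^ (a - 1) * (2 - r) ^ (a - 1)) * Real.exp (-(t * r))) +
      ∫ r in Ioo (0:ℝ) 1, (r ^ (a - 1) * (2 - r) ^ (a - 1)) * Real.exp (-(t * (2 - r))) := by
  rw [← integral_add]
  · unfold MM
    rw [← integral_mul_const]
    conv_lhs => rw [← image_sq]
    rw [integral_image_eq_integral_abs_deriv_smul measurableSet_Ioo
      (fun r _ => deriv_sq' r) injOn_sq]
    refine setIntegral_congr_fun measurableSet_Ioo fun r hr => ?_
    simp only [smul_eq_mul]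
    rw [← mul_assoc, ← mul_assoc, wgt_sq a hr, Real.sqrt_sq (by linarith [hr.2]), Real.cosh_eq]
    have e1 : Real.exp (-(t * r)) = Real.exp (t * (1 - r)) * Real.exp (-t) := by
      rw [← Real.exp_add]; congr 1; ring
    have e2 : Real.exp (-(t * (2 - r))) = Real.exp (-(t * (1 - r))) * Real.exp (-t) := by
      rw [← Real.exp_add]; congr 1; ring
    rw [e1, e2]; ring
  · refine V_exp_int ha _ (by fun_prop) fun r hr => ?_
    rw [abs_of_pos (Real.exp_pos _)]
    exact Real.exp_le_one_iff.2 (by have := mul_nonneg ht hr.1.le; linarith)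
  · refine V_exp_int ha _ (by fun_prop) fun r hr => ?_
    rw [abs_of_pos (Real.exp_pos _)]
    exact Real.exp_le_one_iff.2 (by
      have := mul_nonneg ht (by linarith [hr.2] : (0:ℝ) ≤ 2 - r); linarith)

lemma V_second {a : ℝ} (ha : 0 < a) :
    Tendsto (fun t : ℝ => t ^ a *
      ∫ r in Ioo (0:ℝ) 1, (r ^ (a - 1) * (2 - r) ^ (a - 1)) * Real.exp (-(t * (2 - r))))
      atTop (𝓝 0) := by
  set B := ∫ r in Ioo (0:ℝ) 1, (r ^ (a - 1) * (2 - r) ^ (a - 1)) with hB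
  have h := (tendsto_rpow_mul_exp_neg_mul_atTop_nhds_zero a 1 one_pos).mul_const B
  rw [zero_mul] at h
  refine squeeze_zero' ?_ ?_ h
  · filter_upwards [eventually_gt_atTop 0] with t ht
    refine mul_nonneg (by positivity) (setIntegral_nonneg measurableSet_Ioo fun r hr => ?_)
    have h0 := hr.1
    have h2 : 0 < 2 - r := by linarith [hr.2]
    positivity
  · filter_upwards [eventually_gt_atTop 0] with t ht
    rw [mul_assoc]
    refine mul_le_mul_of_nonneg_left ?_ (by positivity)
    rw [hB, ← integral_const_mul]
    refine setIntegral_mono_on ?_ ((V_int ha).const_mul _) measurableSet_Ioo fun r hr => ?_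
    · refine V_exp_int ha _ (by fun_prop) fun r hr => ?_
      rw [abs_of_pos (Real.exp_pos _)]
      exact Real.exp_le_one_iff.2 (by
        have := mul_nonneg ht.le (by linarith [hr.2] : (0:ℝ) ≤ 2 - r); linarith)
    · have h0 := hr.1
      have h2 : 0 < 2 - r := by linarith [hr.2]
      rw [mul_comm]
      refine mul_le_mul_of_nonneg_right (Real.exp_le_exp.2 ?_) (by positivity)
      nlinarith [hr.2]

lemma V_first {a : ℝ} (ha : 0 < a) :
    Tendsto (fun t : ℝ => t ^ a *
      ∫ r in Ioo (0:ℝ) 1, (r ^ (a - 1) * (2 - r) ^ (a - 1)) * Real.exp (-(t * r)))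
      atTop (𝓝 (2 ^ (a - 1) * Real.Gamma a)) := by
  set φ : ℝ → ℝ := (Ioo (0:ℝ) 1).indicator (fun r => (2 - r) ^ (a - 1)) with hφ
  have hφm : Measurable φ := Measurable.indicator (by fun_prop) measurableSet_Ioo
  have hφb : ∀ r, ‖φ r‖ ≤ 2 ^ (a - 1) + 1 := by
    intro r
    by_cases hr : r ∈ Ioo (0:ℝ) 1
    · have h2 : 0 < 2 - r := by linarith [hr.2]
      rw [hφ, indicator_of_mem hr, Real.norm_of_nonneg (by positivity)]
      rcases le_total 1 a with h | h
      · have : (2 - r) ^ (a - 1) ≤ 2 ^ (a - 1) :=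
          Real.rpow_le_rpow h2.le (by linarith [hr.1]) (by linarith)
        linarith
      · have : (2 - r) ^ (a - 1) ≤ 1 :=
          Real.rpow_le_one_of_one_le_of_nonpos (by linarith [hr.2]) (by linarith)
        have : (0:ℝ) < 2 ^ (a - 1) := by positivity
        linarith
    · rw [hφ, indicator_of_notMem hr, norm_zero]
      positivity
  have key : Tendsto (fun t : ℝ => ∫ w in Ioi (0:ℝ), (Real.exp (-w) * w ^ (a - 1)) * φ (t⁻¹ * w)) atTop
      (𝓝 (∫ w in Ioi (0:ℝ), (Real.exp (-w) * w ^ (a - 1)) * 2 ^ (a - 1))) := by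
    refine tendsto_integral_filter_of_dominated_convergence
      (fun w => (Real.exp (-w) * w ^ (a - 1)) * (2 ^ (a - 1) + 1)) ?_ ?_ ?_ ?_
    · filter_upwards with t
      exact Measurable.aestronglyMeasurable (by fun_prop)
    · filter_upwards with t
      filter_upwards [ae_restrict_mem measurableSet_Ioi] with w hw
      have hw' : 0 < w := hw
      rw [norm_mul, Real.norm_of_nonneg (by positivity : 0 ≤ (Real.exp (-w) * w ^ (a - 1)))]
      exact mul_le_mul_of_nonneg_left (hφb _) (by positivity)
    · exact (Real.GammaIntegral_convergent ha).mul_const _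
    · filter_upwards [ae_restrict_mem measurableSet_Ioi] with w hw
      have hw' : 0 < w := hw
      refine Tendsto.const_mul _ ?_
      have h1 : Tendsto (fun t : ℝ => t⁻¹ * w) atTop (𝓝 0) := by
        simpa using tendsto_inv_atTop_zero.mul_const w
      have h2 : Tendsto (fun t : ℝ => (2 - t⁻¹ * w) ^ (a - 1)) atTop (𝓝 (2 ^ (a - 1))) := by
        have := (h1.const_sub 2).rpow_const (p := a - 1) (by left; norm_num)
        simpa using this
      refine h2.congr' ?_
      filter_upwards [eventually_gt_atTop 0, h1.eventually_lt_const one_pos] with t ht h3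
      rw [hφ, indicator_of_mem]
      exact ⟨by positivity, h3⟩
  rw [integral_mul_const, ← Real.Gamma_eq_integral ha, mul_comm] at key
  refine key.congr' ?_
  filter_upwards [eventually_gt_atTop 0] with t ht
  have h := integral_comp_mul_left_Ioi
    (fun r => r ^ (a - 1) * φ r * Real.exp (-(t * r))) 0 (inv_pos.2 ht)
  rw [mul_zero, inv_inv, smul_eq_mul] at h
  have h5 : ∫ r in Ioo (0:ℝ) 1, (r ^ (a - 1) * (2 - r) ^ (a - 1)) * Real.exp (-(t * r)) =
      ∫ r in Ioi (0:ℝ), r ^ (a - 1) * φ r * Real.exp (-(t * r)) := by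
    have : (fun r => r ^ (a - 1) * φ r * Real.exp (-(t * r))) =
      (Ioo (0:ℝ) 1).indicator (fun r => r ^ (a - 1) * (2 - r) ^ (a - 1) * Real.exp (-(t * r))) := by
      funext r
      by_cases hr : r ∈ Ioo (0:ℝ) 1
      · simp [hφ, hr]
      · simp only [hφ, indicator_of_notMem hr]; ring
    rw [this, setIntegral_indicator measurableSet_Ioo, inter_eq_self_of_subset_right Ioo_subset_Ioi_self]
  have h6 : t ^ a = t ^ (a - 1) * t := by
    rw [Real.rpow_sub_one ht.ne']; field_simp
  rw [h5, h6, mul_assoc, ← h, ← integral_const_mul]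
  refine setIntegral_congr_fun measurableSet_Ioi fun w hw => ?_
  have hw' : 0 < w := hw
  rw [Real.mul_rpow (by positivity) hw'.le, Real.inv_rpow ht.le, mul_inv_cancel_left₀ ht.ne']
  have : 0 < t ^ (a - 1) := by positivity
  field_simp

lemma MM_asymp {a : ℝ} (ha : 0 < a) :
    Tendsto (fun t : ℝ => t ^ a * (MM a t * Real.exp (-t))) atTop (𝓝 (2 ^ (a - 1) * Real.Gamma a)) := by
  have := (V_first ha).add (V_second ha)
  rw [add_zero] at this
  refine this.congr' ?_
  filter_upwards [eventually_ge_atTop 0] with t ht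
  rw [MM_eq ha ht, mul_add]

lemma MM_bdd {a : ℝ} (ha : 0 < a) :
    ∃ C : ℝ, 0 ≤ C ∧ ∀ t : ℝ, 0 < t → t ^ a * (MM a t * Real.exp (-t)) ≤ C := by
  have h := (MM_asymp ha).eventually_le_const (lt_add_one _)
  obtain ⟨T, hT⟩ := eventually_atTop.1 h
  have hG := Real.Gamma_pos_of_pos ha
  refine ⟨max (2 ^ (a - 1) * Real.Gamma a + 1) (|T| ^ a * MM a 0), ?_, fun t ht => ?_⟩
  · exact le_max_of_le_left (by positivity)
  · rcases le_total T t with h1 | h1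
    · exact (hT t h1).trans (le_max_left _ _)
    · refine le_trans ?_ (le_max_right _ _)
      have h2 := MM_le ha ht.le
      have h3 : MM a t * Real.exp (-t) ≤ MM a 0 := by
        calc _ ≤ MM a 0 * Real.exp t * Real.exp (-t) :=
              mul_le_mul_of_nonneg_right h2 (Real.exp_pos _).le
          _ = MM a 0 := by rw [mul_assoc, ← Real.exp_add]; simp
      have h4 : t ^ a ≤ |T| ^ a := Real.rpow_le_rpow ht.le (h1.trans (le_abs_self _)) ha.le
      exact mul_le_mul h4 h3 (mul_nonneg (MM_nonneg _ _) (Real.exp_pos _).le) (by positivity)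

end Helpers2

section Helpers3
open Filter Topology Set

lemma cosh_ge (t : ℝ) : 1 + t ^ 2 / 2 ≤ Real.cosh t := by
  have h : Real.cosh t = 1 + 2 * Real.sinh (t / 2) ^ 2 := by
    have := Real.cosh_two_mul (t / 2)
    rw [Real.cosh_sq] at this
    rw [show 2 * (t / 2) = t by ring] at this
    linarith
  have h2 : (t / 2) ^ 2 ≤ Real.sinh (t / 2) ^ 2 := by
    rcases le_total 0 (t / 2) with h0 | h0
    · have := Real.self_le_sinh_iff.2 h0
      gcongr
    · have := Real.sinh_le_self_iff.2 h0
      nlinarith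
  nlinarith

lemma cosh_le_exp_abs' (y : ℝ) : Real.cosh y ≤ Real.exp |y| := by
  rw [Real.cosh_eq]
  have h1 : Real.exp y ≤ Real.exp |y| := Real.exp_le_exp.2 (le_abs_self y)
  have h2 : Real.exp (-y) ≤ Real.exp |y| := Real.exp_le_exp.2 (neg_le_abs y)
  linarith

lemma gauss_cosh_le (μ : ℝ) {x : ℝ} (hx : 0 < x) (t : ℝ) :
    Real.exp (-(x * (t ^ 2 / 2))) * Real.cosh (μ * t) ≤ Real.exp (μ ^ 2 / x) * Real.exp (-(x / 4) * t ^ 2) := by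
  refine (mul_le_mul_of_nonneg_left (cosh_le_exp_abs' _) (Real.exp_pos _).le).trans ?_
  rw [← Real.exp_add, ← Real.exp_add]
  apply Real.exp_le_exp.2
  have h : |μ * t| ≤ μ ^ 2 / x + x * t ^ 2 / 4 := by
    rw [abs_le]
    have e : ∀ s : ℝ, μ ^ 2 / x + x * t ^ 2 / 4 + s * (μ * t) =
      (μ / x + s * t / 2) ^ 2 * x + x * t ^ 2 / 4 * (1 - s ^ 2) := by
      intro s; field_simp; ring
    have e1 := e 1
    have e2 := e (-1)
    have p1 : 0 ≤ (μ / x + 1 * t / 2) ^ 2 * x := by positivity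
    have p2 : 0 ≤ (μ / x + (-1) * t / 2) ^ 2 * x := by positivity
    constructor <;> nlinarith
  nlinarith

lemma gauss_int {x : ℝ} (hx : 0 < x) (c : ℝ) :
    IntegrableOn (fun t : ℝ => c * Real.exp (-(x / 4) * t ^ 2)) (Ioi 0) :=
  ((integrable_exp_neg_mul_sq (by positivity : 0 < x / 4)).const_mul c).integrableOn

lemma K_int (μ : ℝ) {x : ℝ} (hx : 0 < x) :
    IntegrableOn (fun t : ℝ => Real.exp (-x * Real.cosh t) * Real.cosh (μ * t)) (Ioi 0) := by
  refine Integrable.mono' (gauss_int hx (Real.exp (μ ^ 2 / x)))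
    (Measurable.aestronglyMeasurable (by fun_prop)) ?_
  filter_upwards with t
  rw [Real.norm_of_nonneg (mul_nonneg (Real.exp_pos _).le (Real.cosh_pos _).le)]
  refine le_trans ?_ (gauss_cosh_le μ hx t)
  refine mul_le_mul_of_nonneg_right (Real.exp_le_exp.2 ?_) (Real.cosh_pos _).le
  have := cosh_ge t
  nlinarith

lemma K_nonneg (μ x : ℝ) : 0 ≤ besselK μ x :=
  integral_nonneg fun t => mul_nonneg (Real.exp_pos _).le (Real.cosh_pos _).le

lemma K_anti (μ : ℝ) {x y : ℝ} (hx : 0 < x) (hxy : x ≤ y) : besselK μ y ≤ besselK μ x := by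
  unfold besselK
  refine setIntegral_mono_on (K_int μ (hx.trans_le hxy)) (K_int μ hx) measurableSet_Ioi fun t _ => ?_
  refine mul_le_mul_of_nonneg_right (Real.exp_le_exp.2 ?_) (Real.cosh_pos _).le
  have := Real.cosh_pos t
  nlinarith

lemma cosh_lim (s : ℝ) :
    Tendsto (fun x : ℝ => x * (Real.cosh ((√x)⁻¹ * s) - 1)) atTop (𝓝 (s ^ 2 / 2)) := by
  have h0 : Tendsto (fun x : ℝ => (√x)⁻¹) atTop (𝓝[≠] 0) := by
    have : Tendsto (fun x : ℝ => √x) atTop atTop := Real.tendsto_sqrt_atTop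
    have h2 := tendsto_inv_atTop_nhdsGT_zero.comp this
    exact h2.mono_right (nhdsWithin_mono _ fun y hy => ne_of_gt hy)
  have hd : HasDerivAt (fun y : ℝ => Real.sinh (y * (s / 2))) (s / 2) 0 := by
    have := ((hasDerivAt_id (0:ℝ)).mul_const (s / 2)).sinh
    simpa using this
  have h1 := (hasDerivAt_iff_tendsto_slope_zero.1 hd).comp h0
  have h2 := (h1.pow 2).const_mul 2
  have e : 2 * (s / 2) ^ 2 = s ^ 2 / 2 := by ring
  rw [e] at h2
  refine h2.congr' ?_
  filter_upwards [eventually_gt_atTop 0] with x hx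
  have hs := Real.sqrt_pos.2 hx
  have h : Real.cosh ((√x)⁻¹ * s) = 1 + 2 * Real.sinh ((√x)⁻¹ * (s / 2)) ^ 2 := by
    have := Real.cosh_two_mul ((√x)⁻¹ * (s / 2))
    rw [Real.cosh_sq] at this
    rw [show 2 * ((√x)⁻¹ * (s / 2)) = (√x)⁻¹ * s by ring] at this
    linarith
  simp only [Function.comp, zero_add, zero_mul, Real.sinh_zero, sub_zero, inv_inv, smul_eq_mul]
  rw [h, mul_pow, Real.sq_sqrt hx.le]
  ring

lemma K_top (μ : ℝ) :
    Tendsto (fun x : ℝ => √x * (Real.exp x * besselK μ x)) atTop (𝓝 (√(π / 2))) := by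
  have key : Tendsto (fun x : ℝ => ∫ s in Ioi (0:ℝ),
      Real.exp (-(x * (Real.cosh ((√x)⁻¹ * s) - 1))) * Real.cosh (μ * ((√x)⁻¹ * s))) atTop
      (𝓝 (∫ s in Ioi (0:ℝ), Real.exp (-(s ^ 2 / 2)) * Real.cosh 0)) := by
    refine tendsto_integral_filter_of_dominated_convergence
      (fun s => Real.exp (μ ^ 2 / 1) * Real.exp (-(1 / 4) * s ^ 2)) ?_ ?_ (gauss_int one_pos _) ?_
    · filter_upwards with x
      exact Measurable.aestronglyMeasurable (by fun_prop)
    · filter_upwards [eventually_ge_atTop 1] with x hx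
      filter_upwards with s
      rw [Real.norm_of_nonneg (mul_nonneg (Real.exp_pos _).le (Real.cosh_pos _).le)]
      refine le_trans ?_ (gauss_cosh_le μ one_pos s)
      have hx0 : 0 < x := by linarith
      have hs : 0 < √x := Real.sqrt_pos.2 hx0
      refine mul_le_mul (Real.exp_le_exp.2 ?_) ?_ (Real.cosh_pos _).le (Real.exp_pos _).le
      · have := cosh_ge ((√x)⁻¹ * s)
        rw [mul_pow, inv_pow, Real.sq_sqrt hx0.le] at this
        have h3 : x * (x⁻¹ * s ^ 2 / 2) ≤ x * (Real.cosh ((√x)⁻¹ * s) - 1) :=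
          mul_le_mul_of_nonneg_left (by linarith) hx0.le
        have h4 : x * (x⁻¹ * s ^ 2 / 2) = s ^ 2 / 2 := by field_simp
        linarith
      · rw [Real.cosh_le_cosh, abs_mul, abs_mul, abs_mul]
        have : |(√x)⁻¹| ≤ 1 := by
          rw [abs_of_pos (by positivity)]
          exact inv_le_one_of_one_le₀ (Real.one_le_sqrt.2 hx)
        refine mul_le_mul_of_nonneg_left ?_ (abs_nonneg _)
        exact mul_le_of_le_one_left (abs_nonneg _) this
    · filter_upwards with s
      refine Tendsto.mul ?_ ?_
      · exact (Real.continuous_exp.tendsto _).comp (cosh_lim s).neg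
      · refine (Real.continuous_cosh.tendsto _).comp ?_
        have h1 : Tendsto (fun x : ℝ => (√x)⁻¹) atTop (𝓝 0) :=
          tendsto_inv_atTop_zero.comp Real.tendsto_sqrt_atTop
        simpa using (h1.mul_const s).const_mul μ
  have hv : ∫ s in Ioi (0:ℝ), Real.exp (-(s ^ 2 / 2)) * Real.cosh 0 = √(π / 2) := by
    have h := integral_gaussian_Ioi (1/2)
    have : (fun s : ℝ => Real.exp (-(s ^ 2 / 2)) * Real.cosh 0) = fun s => Real.exp (-(1/2) * s ^ 2) := by
      funext s; rw [Real.cosh_zero, mul_one]; congr 1; ring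
    rw [this, h]
    have e : π / (1/2) = 2 ^ 2 * (π / 2) := by ring
    rw [e, Real.sqrt_mul (by norm_num), Real.sqrt_sq (by norm_num)]
    ring
  rw [hv] at key
  refine key.congr' ?_
  filter_upwards [eventually_gt_atTop 0] with x hx
  have hs : 0 < √x := Real.sqrt_pos.2 hx
  have h := integral_comp_mul_left_Ioi
    (fun t => Real.exp (-(x * (Real.cosh t - 1))) * Real.cosh (μ * t)) 0 (inv_pos.2 hs)
  rw [mul_zero, inv_inv, smul_eq_mul] at h
  rw [h]
  congr 1
  unfold besselK
  rw [← integral_const_mul]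
  congr 1
  funext t
  rw [← mul_assoc, ← Real.exp_add]
  congr 2; ring

lemma image_exp' {x : ℝ} (hx : 0 < x) : (fun t : ℝ => x / 2 * Real.exp t) '' Ioi 0 = Ioi (x / 2) := by
  ext w
  constructor
  · rintro ⟨t, ht, rfl⟩
    have : 1 < Real.exp t := Real.one_lt_exp_iff.2 ht
    simp only [mem_Ioi]
    nlinarith
  · intro hw
    have hw' : x / 2 < w := hw
    have hw0 : 0 < w := by linarith
    refine ⟨Real.log (w / (x / 2)), ?_, ?_⟩
    · exact Real.log_pos ((one_lt_div (by positivity)).2 hw')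
    · simp only
      rw [Real.exp_log (by positivity)]
      field_simp

lemma K_zero_first {μ : ℝ} (hμ : 0 < μ) :
    Tendsto (fun x : ℝ => (x / 2) ^ μ *
      ∫ t in Ioi (0:ℝ), Real.exp (-x * Real.cosh t) * Real.exp (μ * t)) (𝓝[>] 0) (𝓝 (Real.Gamma μ)) := by
  have key : Tendsto (fun x : ℝ => ∫ w in Ioi (0:ℝ), (Ioi (x / 2)).indicator
      (fun w => Real.exp (-w) * w ^ (μ - 1) * Real.exp (-(x ^ 2 / (4 * w)))) w) (𝓝[>] 0)
      (𝓝 (∫ w in Ioi (0:ℝ), Real.exp (-w) * w ^ (μ - 1))) := by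
    refine tendsto_integral_filter_of_dominated_convergence
      (fun w => (Real.exp (-w) * w ^ (μ - 1))) ?_ ?_ (Real.GammaIntegral_convergent hμ) ?_
    · filter_upwards with x
      exact (Measurable.indicator (by fun_prop) measurableSet_Ioi).aestronglyMeasurable
    · filter_upwards with x
      filter_upwards [ae_restrict_mem measurableSet_Ioi] with w hw
      have hw' : 0 < w := hw
      refine (norm_indicator_le_norm_self _ _).trans ?_
      rw [Real.norm_of_nonneg (by positivity)]
      refine mul_le_of_le_one_right (by positivity) (Real.exp_le_one_iff.2 ?_)
      have : 0 ≤ x ^ 2 / (4 * w) := by positivity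
      linarith
    · filter_upwards [ae_restrict_mem measurableSet_Ioi] with w hw
      have hw' : 0 < w := hw
      have hc : Continuous (fun x : ℝ => Real.exp (-w) * w ^ (μ - 1) * Real.exp (-(x ^ 2 / (4 * w)))) := by
        fun_prop
      have h1 := (hc.tendsto 0).mono_left (nhdsWithin_le_nhds (s := Ioi 0))
      norm_num at h1
      refine h1.congr' ?_
      have : ∀ᶠ x in 𝓝[>] (0:ℝ), x < 2 * w :=
        nhdsWithin_le_nhds (eventually_lt_nhds (by positivity))
      filter_upwards [this] with x hx
      rw [indicator_of_mem]
      simp only [mem_Ioi]; linarith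
  rw [← Real.Gamma_eq_integral hμ] at key
  refine key.congr' ?_
  filter_upwards [self_mem_nhdsWithin] with x hx
  have hx' : 0 < x := hx
  rw [setIntegral_indicator measurableSet_Ioi,
    inter_eq_self_of_subset_right (Ioi_subset_Ioi (by positivity)), ← image_exp' hx',
    integral_image_eq_integral_abs_deriv_smul (f' := fun t => x / 2 * Real.exp t) measurableSet_Ioi
      (fun t _ => ((Real.hasDerivAt_exp t).const_mul (x / 2)).hasDerivWithinAt)
      (fun t _ s _ h => by simpa [hx'.ne'] using h), ← integral_const_mul]
  refine setIntegral_congr_fun measurableSet_Ioi fun t ht => ?_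
  simp only [smul_eq_mul]
  have hw : 0 < x / 2 * Real.exp t := by positivity
  rw [abs_of_pos hw]
  have e1 : (x / 2 * Real.exp t) ^ (μ - 1) = (x / 2) ^ μ * Real.exp (μ * t) / (x / 2 * Real.exp t) := by
    rw [Real.rpow_sub_one hw.ne', Real.mul_rpow (by positivity) (Real.exp_pos _).le,
      ← Real.exp_mul, mul_comm t μ]
  have e2 : Real.exp (-x * Real.cosh t) =
      Real.exp (-(x / 2 * Real.exp t)) * Real.exp (-(x ^ 2 / (4 * (x / 2 * Real.exp t)))) := by
    rw [← Real.exp_add, Real.cosh_eq, Real.exp_neg t]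
    congr 1
    have := Real.exp_pos t
    field_simp
    ring
  rw [e1, e2]
  have h1 := hw.ne'
  field_simp

lemma K_zero {μ : ℝ} (hμ : 0 < μ) :
    Tendsto (fun x : ℝ => x ^ μ * besselK μ x) (𝓝[>] 0) (𝓝 (2 ^ (μ - 1) * Real.Gamma μ)) := by
  have h1 := (K_zero_first hμ).const_mul (2 ^ (μ - 1))
  have hExpInt : IntegrableOn (fun t : ℝ => Real.exp (-μ * t)) (Ioi 0) := exp_neg_integrableOn_Ioi 0 hμ
  have hneg : ∀ x : ℝ, 0 < x →
      IntegrableOn (fun t : ℝ => Real.exp (-x * Real.cosh t) * Real.exp (-μ * t)) (Ioi 0) := by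
    intro x hx
    refine Integrable.mono' hExpInt (Measurable.aestronglyMeasurable (by fun_prop)) ?_
    filter_upwards with t
    rw [Real.norm_of_nonneg (by positivity)]
    refine mul_le_of_le_one_left (Real.exp_pos _).le (Real.exp_le_one_iff.2 ?_)
    have := Real.cosh_pos t
    nlinarith
  have hx0 : Tendsto (fun x : ℝ => x ^ μ) (𝓝[>] 0) (𝓝 0) := by
    have := (Real.continuousAt_rpow_const 0 μ (Or.inr hμ.le)).tendsto
    rw [Real.zero_rpow hμ.ne'] at this
    exact this.mono_left nhdsWithin_le_nhds
  have h2 : Tendsto (fun x : ℝ => x ^ μ * (1 / 2 *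
      ∫ t in Ioi (0:ℝ), Real.exp (-x * Real.cosh t) * Real.exp (-μ * t))) (𝓝[>] 0) (𝓝 0) := by
    have h3 := hx0.mul_const (1 / 2 * ∫ t in Ioi (0:ℝ), Real.exp (-μ * t))
    rw [zero_mul] at h3
    refine squeeze_zero' ?_ ?_ h3
    · filter_upwards [self_mem_nhdsWithin] with x hx
      have hx' : 0 < x := hx
      have : 0 ≤ ∫ t in Ioi (0:ℝ), Real.exp (-x * Real.cosh t) * Real.exp (-μ * t) :=
        integral_nonneg fun t => by positivity
      positivity
    · filter_upwards [self_mem_nhdsWithin] with x hx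
      have hx' : 0 < x := hx
      have : ∫ t in Ioi (0:ℝ), Real.exp (-x * Real.cosh t) * Real.exp (-μ * t) ≤
          ∫ t in Ioi (0:ℝ), Real.exp (-μ * t) := by
        refine setIntegral_mono_on (hneg x hx') hExpInt measurableSet_Ioi fun t _ => ?_
        refine mul_le_of_le_one_left (Real.exp_pos _).le (Real.exp_le_one_iff.2 ?_)
        have := Real.cosh_pos t
        nlinarith
      gcongr
  have h4 := h1.add h2
  rw [add_zero] at h4
  refine h4.congr' ?_
  filter_upwards [self_mem_nhdsWithin] with x hx
  have hx' : 0 < x := hx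
  have hpos : IntegrableOn (fun t : ℝ => Real.exp (-x * Real.cosh t) * Real.exp (μ * t)) (Ioi 0) := by
    refine IntegrableOn.congr_fun (((K_int μ hx').const_mul 2).sub (hneg x hx')) (fun t _ => ?_) measurableSet_Ioi
    simp only [Pi.sub_apply, Real.cosh_eq (μ * t)]
    rw [neg_mul μ t]
    ring
  have hK : besselK μ x = 1 / 2 * (∫ t in Ioi (0:ℝ), Real.exp (-x * Real.cosh t) * Real.exp (μ * t)) +
     1 / 2 * ∫ t in Ioi (0:ℝ), Real.exp (-x * Real.cosh t) * Real.exp (-μ * t) := by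
    rw [← mul_add, ← integral_add hpos (hneg x hx'), ← integral_const_mul]
    unfold besselK
    congr 1
    funext t
    rw [Real.cosh_eq (μ * t), neg_mul μ t]
    ring
  rw [hK, Real.div_rpow hx'.le (by norm_num), Real.rpow_sub_one (by norm_num)]
  have : (0:ℝ) < 2 ^ μ := by positivity
  field_simp

end Helpers3

section Helpers4
open Filter Topology Set

lemma J_zero_gen {p : ℝ} (hp : -1 < p) {q : ℝ → ℝ} (hq : Continuous q) :
    Tendsto (fun x : ℝ => x ^ (-(p + 1)) * ∫ t in (0:ℝ)..x, q t * t ^ p) (𝓝[>] 0)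
      (𝓝 (q 0 / (p + 1))) := by
  have hrp : IntegrableOn (fun s : ℝ => s ^ p) (Ioc 0 1) := by
    have := intervalIntegral.intervalIntegrable_rpow' (a := 0) (b := 1) hp
    rwa [intervalIntegrable_iff_integrableOn_Ioc_of_le (by norm_num)] at this
  have key : Tendsto (fun x : ℝ => ∫ s in Ioc (0:ℝ) 1, q (x * s) * s ^ p) (𝓝[>] 0)
      (𝓝 (∫ s in Ioc (0:ℝ) 1, q 0 * s ^ p)) := by
    refine tendsto_integral_filter_of_dominated_convergence
      (fun s => (|q 0| + 1) * s ^ p) ?_ ?_ (hrp.const_mul _) ?_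
    · filter_upwards with x
      have := hq.measurable
      exact Measurable.aestronglyMeasurable (by fun_prop)
    · have h1 : ∀ᶠ t in 𝓝 (0:ℝ), |q t| < |q 0| + 1 :=
        (hq.abs.tendsto 0).eventually_lt_const (by linarith)
      obtain ⟨δ, hδ, h2⟩ := Metric.eventually_nhds_iff.1 h1
      have h3 : ∀ᶠ x in 𝓝[>] (0:ℝ), x < δ := nhdsWithin_le_nhds (eventually_lt_nhds hδ)
      filter_upwards [h3, self_mem_nhdsWithin] with x hx hx0
      have hx' : 0 < x := hx0
      filter_upwards [ae_restrict_mem measurableSet_Ioc] with s hs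
      have hs0 := hs.1
      rw [norm_mul, Real.norm_of_nonneg (by positivity : 0 ≤ s ^ p)]
      refine mul_le_mul_of_nonneg_right (le_of_lt (h2 ?_)) (by positivity)
      rw [Real.dist_eq, sub_zero, abs_of_pos (by positivity)]
      nlinarith [hs.2]
    · filter_upwards with s
      refine Tendsto.mul_const _ ?_
      have : Continuous (fun x => q (x * s)) := by fun_prop
      have h := (this.tendsto 0).mono_left (nhdsWithin_le_nhds (s := Ioi 0))
      rwa [zero_mul] at h
  have hv : ∫ s in Ioc (0:ℝ) 1, q 0 * s ^ p = q 0 / (p + 1) := by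
    rw [integral_const_mul, ← intervalIntegral.integral_of_le (by norm_num), integral_rpow (Or.inl hp),
      Real.one_rpow, Real.zero_rpow (by linarith)]
    ring
  rw [hv] at key
  refine key.congr' ?_
  filter_upwards [self_mem_nhdsWithin] with x hx
  have hx' : 0 < x := hx
  have h := intervalIntegral.integral_comp_mul_left (a := 0) (b := 1) (fun t => q t * t ^ p) hx'.ne'
  rw [mul_zero, mul_one, smul_eq_mul] at h
  have h2 : ∫ t in (0:ℝ)..x, q t * t ^ p = x * ∫ s in (0:ℝ)..1, q (x * s) * (x * s) ^ p := by
    rw [h]; field_simp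
  rw [h2, intervalIntegral.integral_of_le (by norm_num), ← integral_const_mul, ← integral_const_mul]
  refine setIntegral_congr_fun measurableSet_Ioc fun s hs => ?_
  rw [Real.mul_rpow hx'.le hs.1.le, Real.rpow_neg hx'.le, Real.rpow_add_one hx'.ne']
  have : 0 < x ^ p := by positivity
  field_simp

lemma J_top_int {p b C : ℝ} (hp : -1 < p) (hb : 0 < b) {P : ℝ → ℝ} (hP : Measurable P)
    (hC : ∀ t, 0 < t → |P t| ≤ C) {y : ℝ} (hy : 0 < y) :
    IntervalIntegrable (fun t => Real.exp (b * t) * t ^ p * P t) volume 0 y := by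
  have h := intervalIntegral.intervalIntegrable_rpow' (a := 0) (b := y) hp
  rw [intervalIntegrable_iff_integrableOn_Ioc_of_le hy.le] at h ⊢
  refine Integrable.mono' (h.const_mul (Real.exp (b * y) * C))
    (Measurable.aestronglyMeasurable (by fun_prop)) ?_
  filter_upwards [ae_restrict_mem measurableSet_Ioc] with t ht
  have h0 := ht.1
  rw [norm_mul, norm_mul, Real.norm_of_nonneg (Real.exp_pos _).le,
    Real.norm_of_nonneg (by positivity : 0 ≤ t ^ p)]
  have h1 : Real.exp (b * t) ≤ Real.exp (b * y) :=
    Real.exp_le_exp.2 (mul_le_mul_of_nonneg_left ht.2 hb.le)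
  have h2 : ‖P t‖ ≤ C := hC t h0
  calc Real.exp (b * t) * t ^ p * ‖P t‖ ≤ Real.exp (b * y) * t ^ p * C := by gcongr
    _ = _ := by ring

lemma J_top_small {p b C : ℝ} (hp : -1 < p) (hb : 0 < b) {P : ℝ → ℝ} (hP : Measurable P)
    (hC : ∀ t, 0 < t → |P t| ≤ C) :
    Tendsto (fun x : ℝ => x ^ (-p) * Real.exp (-(b * x)) *
      ∫ t in (0:ℝ)..(x/2), Real.exp (b * t) * t ^ p * P t) atTop (𝓝 0) := by
  have h := (tendsto_rpow_mul_exp_neg_mul_atTop_nhds_zero 1 (b/2) (by positivity)).mul_const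
    (C * (1/2) ^ (p + 1) / (p + 1))
  rw [zero_mul] at h
  refine squeeze_zero_norm' ?_ h
  filter_upwards [eventually_gt_atTop 0] with x hx
  have hx2 : 0 < x / 2 := by positivity
  rw [norm_mul, Real.norm_of_nonneg (by positivity : 0 ≤ x ^ (-p) * Real.exp (-(b * x)))]
  have hb1 : ‖∫ t in (0:ℝ)..(x/2), Real.exp (b * t) * t ^ p * P t‖ ≤
      ∫ t in (0:ℝ)..(x/2), Real.exp (b * (x/2)) * C * t ^ p := by
    refine intervalIntegral.norm_integral_le_of_norm_le hx2.le ?_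
      ((intervalIntegral.intervalIntegrable_rpow' hp).const_mul _)
    filter_upwards with t ht
    have h0 := ht.1
    rw [norm_mul, norm_mul, Real.norm_of_nonneg (Real.exp_pos _).le,
      Real.norm_of_nonneg (by positivity : 0 ≤ t ^ p)]
    have h1 : Real.exp (b * t) ≤ Real.exp (b * (x/2)) :=
      Real.exp_le_exp.2 (mul_le_mul_of_nonneg_left ht.2 hb.le)
    have h2 : ‖P t‖ ≤ C := hC t h0
    calc Real.exp (b * t) * t ^ p * ‖P t‖ ≤ Real.exp (b * (x/2)) * t ^ p * C := by gcongr
      _ = _ := by ring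
  rw [intervalIntegral.integral_const_mul, integral_rpow (Or.inl hp),
    Real.zero_rpow (by linarith), sub_zero] at hb1
  refine (mul_le_mul_of_nonneg_left hb1 (by positivity)).trans (le_of_eq ?_)
  have e1 : Real.exp (-(b * x)) = Real.exp (-(b/2) * x) * Real.exp (-(b * (x/2))) := by
    rw [← Real.exp_add]; congr 1; ring
  have e2 : Real.exp (-(b * (x/2))) * Real.exp (b * (x/2)) = 1 := by
    rw [← Real.exp_add]; simp
  have e3 : (x/2) ^ (p+1) = x ^ p * x * (1/2) ^ (p + 1) := by
    rw [← Real.rpow_add_one hx.ne', ← Real.mul_rpow hx.le (by norm_num)]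
    congr 1; ring
  have e4 : x ^ (-p) * x ^ p = 1 := by rw [← Real.rpow_add hx]; simp
  rw [e1, e3, Real.rpow_one]
  calc _ = (x ^ (-p) * x ^ p) * (Real.exp (-(b * (x/2))) * Real.exp (b * (x/2))) *
        (x * Real.exp (-(b/2) * x) * (C * (1/2) ^ (p+1) / (p+1))) := by ring
    _ = _ := by rw [e4, e2]; ring

lemma rpow_half_bd (p : ℝ) {y : ℝ} (h1 : 1/2 ≤ y) (h2 : y ≤ 1) : y ^ p ≤ 1 + (1/2) ^ p := by
  have hy : 0 < y := by linarith
  have hh : (0:ℝ) < (1/2) ^ p := by positivity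
  rcases le_total 0 p with h | h
  · have := Real.rpow_le_one hy.le h2 h
    linarith
  · have := Real.rpow_le_rpow_of_nonpos (by norm_num : (0:ℝ) < 1/2) h1 h
    linarith

lemma J_top_big {p b C L : ℝ} (hb : 0 < b) {P : ℝ → ℝ} (hP : Measurable P)
    (hC : ∀ t, 0 < t → |P t| ≤ C) (hL : Tendsto P atTop (𝓝 L)) :
    Tendsto (fun x : ℝ => x ^ (-p) * Real.exp (-(b * x)) *
      ∫ t in (x/2)..x, Real.exp (b * t) * t ^ p * P t) atTop (𝓝 (L / b)) := by
  have hC0 : 0 ≤ C := (abs_nonneg _).trans (hC 1 one_pos)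
  have hei : IntegrableOn (fun w : ℝ => Real.exp (-b * w)) (Ioi 0) := exp_neg_integrableOn_Ioi 0 hb
  have key : Tendsto (fun x : ℝ => ∫ w in Ioi (0:ℝ), (Ioc 0 (x/2)).indicator
      (fun w => Real.exp (-b * w) * ((1 - x⁻¹ * w) ^ p * P (x - w))) w) atTop
      (𝓝 (∫ w in Ioi (0:ℝ), Real.exp (-b * w) * (1 * L))) := by
    refine tendsto_integral_filter_of_dominated_convergence
      (fun w => Real.exp (-b * w) * ((1 + (1/2) ^ p) * C)) ?_ ?_ (hei.mul_const _) ?_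
    · filter_upwards with x
      exact (Measurable.indicator (by fun_prop) measurableSet_Ioc).aestronglyMeasurable
    · filter_upwards [eventually_gt_atTop 0] with x hx
      filter_upwards with w
      by_cases hw : w ∈ Ioc 0 (x/2)
      · rw [indicator_of_mem hw, norm_mul, norm_mul, Real.norm_of_nonneg (Real.exp_pos _).le]
        have h1 : x⁻¹ * w ≤ 1/2 := by
          have := mul_le_mul_of_nonneg_left hw.2 (inv_pos.2 hx).le
          have e : x⁻¹ * (x/2) = 1/2 := by field_simp
          linarith
        have h2 : 0 < x⁻¹ * w := mul_pos (inv_pos.2 hx) hw.1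
        have h3 : 0 < 1 - x⁻¹ * w := by linarith
        rw [Real.norm_of_nonneg (by positivity : 0 ≤ (1 - x⁻¹ * w) ^ p)]
        have h4 := rpow_half_bd p (y := 1 - x⁻¹ * w) (by linarith) (by linarith)
        have h5 : ‖P (x - w)‖ ≤ C := hC _ (by linarith [hw.2])
        gcongr
      · rw [indicator_of_notMem hw, norm_zero]
        positivity
    · filter_upwards [ae_restrict_mem measurableSet_Ioi] with w hw
      have hw' : 0 < w := hw
      have h1 : Tendsto (fun x : ℝ => x⁻¹ * w) atTop (𝓝 0) := by
        simpa using tendsto_inv_atTop_zero.mul_const w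
      have h2 : Tendsto (fun x : ℝ => (1 - x⁻¹ * w) ^ p) atTop (𝓝 1) := by
        have := (h1.const_sub 1).rpow_const (p := p) (by left; norm_num)
        simpa using this
      have h3 : Tendsto (fun x : ℝ => P (x - w)) atTop (𝓝 L) :=
        hL.comp (tendsto_atTop_add_const_right _ (-w) tendsto_id)
      refine ((h2.mul h3).const_mul (Real.exp (-b * w))).congr' ?_
      filter_upwards [eventually_ge_atTop (2 * w)] with x hx
      rw [indicator_of_mem]
      exact ⟨hw', by linarith⟩
  have hv : ∫ w in Ioi (0:ℝ), Real.exp (-b * w) * (1 * L) = L / b := by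
    rw [integral_mul_const, integral_exp_mul_Ioi (by linarith)]
    simp
    field_simp
  rw [hv] at key
  refine key.congr' ?_
  filter_upwards [eventually_gt_atTop 0] with x hx
  have h := intervalIntegral.integral_comp_sub_left (a := 0) (b := x/2)
    (fun t => Real.exp (b * t) * t ^ p * P t) x
  rw [sub_zero, show x - x / 2 = x / 2 by ring] at h
  rw [setIntegral_indicator measurableSet_Ioc, inter_eq_self_of_subset_right Ioc_subset_Ioi_self,
    ← h, intervalIntegral.integral_of_le (by positivity), ← integral_const_mul]
  refine setIntegral_congr_fun measurableSet_Ioc fun w hw => ?_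
  have e1 : Real.exp (-b * w) = Real.exp (-(b * x)) * Real.exp (b * (x - w)) := by
    rw [← Real.exp_add]; congr 1; ring
  have e2 : x - w = x * (1 - x⁻¹ * w) := by field_simp
  have h1 : 0 ≤ 1 - x⁻¹ * w := by
    have h3 : 0 ≤ x - w := by linarith [hw.2]
    rw [e2] at h3
    exact nonneg_of_mul_nonneg_right h3 hx
  have e3 : (x - w) ^ p = x ^ p * (1 - x⁻¹ * w) ^ p := by
    rw [e2, Real.mul_rpow hx.le h1]
  have e4 : x ^ (-p) * x ^ p = 1 := by rw [← Real.rpow_add hx]; simp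
  rw [e1, e3]
  calc _ = 1 * (Real.exp (-(b * x)) * Real.exp (b * (x - w)) * ((1 - x⁻¹ * w) ^ p * P (x - w))) := by ring
    _ = _ := by rw [← e4]; ring

lemma J_top_gen {p b C L : ℝ} (hp : -1 < p) (hb : 0 < b) {P : ℝ → ℝ} (hP : Measurable P)
    (hC : ∀ t, 0 < t → |P t| ≤ C) (hL : Tendsto P atTop (𝓝 L)) :
    Tendsto (fun x : ℝ => x ^ (-p) * Real.exp (-(b * x)) *
      ∫ t in (0:ℝ)..x, Real.exp (b * t) * t ^ p * P t) atTop (𝓝 (L / b)) := by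
  have h := (J_top_small hp hb hP hC).add (J_top_big (p := p) hb hP hC hL)
  rw [zero_add] at h
  refine h.congr' ?_
  filter_upwards [eventually_gt_atTop 0] with x hx
  have i1 := J_top_int hp hb hP hC (y := x/2) (by positivity)
  have i2 := J_top_int hp hb hP hC hx
  rw [← mul_add, intervalIntegral.integral_add_adjacent_intervals i1 (i1.symm.trans i2)]

end Helpers4

section Helpers5
open Filter Topology Set

/-- The integral in the statement. -/
noncomputable def JJ (β ν x : ℝ) : ℝ := ∫ t in (0 : ℝ)..x, Real.exp (β * t) * t ^ ν * besselI ν t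

/-- Normalising constant. -/
noncomputable def cc (ν : ℝ) : ℝ := (2 ^ ν)⁻¹ / (√π * Real.Gamma (ν + 1/2))

lemma integrand_eq (β : ℝ) {ν : ℝ} (hν : -(1/2) < ν) {t : ℝ} (ht : 0 < t) :
    Real.exp (β * t) * t ^ ν * besselI ν t =
      cc ν * ((Real.exp (β * t) * MM (ν + 1/2) t) * t ^ (2 * ν)) := by
  rw [besselI_eq hν ht, Real.div_rpow ht.le (by norm_num), two_mul, Real.rpow_add ht, cc]
  ring

lemma JJ_eq (β : ℝ) {ν : ℝ} (hν : -(1/2) < ν) {x : ℝ} (hx : 0 < x) :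
    JJ β ν x = cc ν * ∫ t in (0 : ℝ)..x, (Real.exp (β * t) * MM (ν + 1/2) t) * t ^ (2 * ν) := by
  unfold JJ
  rw [← intervalIntegral.integral_const_mul, intervalIntegral.integral_of_le hx.le,
    intervalIntegral.integral_of_le hx.le]
  exact setIntegral_congr_fun measurableSet_Ioc fun t ht => integrand_eq β hν ht.1

lemma q_int (β : ℝ) {ν : ℝ} (hν : -(1/2) < ν) (x y : ℝ) :
    IntervalIntegrable (fun t => (Real.exp (β * t) * MM (ν + 1/2) t) * t ^ (2 * ν)) volume x y := by
  have hM := MM_cont (a := ν + 1/2) (by linarith)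
  refine (intervalIntegral.intervalIntegrable_rpow' (by linarith)).continuousOn_mul ?_
  exact Continuous.continuousOn (by fun_prop)

lemma cc_pos {ν : ℝ} (hν : -(1/2) < ν) : 0 < cc ν := by
  have := Real.Gamma_pos_of_pos (by linarith : 0 < ν + 1/2)
  have := Real.sqrt_pos.2 Real.pi_pos
  unfold cc; positivity

lemma JJ_mono (β : ℝ) {ν : ℝ} (hν : -(1/2) < ν) {x y : ℝ} (hx : 0 < x) (hxy : x ≤ y) :
    0 ≤ JJ β ν x ∧ JJ β ν x ≤ JJ β ν y := by
  have hn : ∀ t, 0 ≤ t → 0 ≤ (Real.exp (β * t) * MM (ν + 1/2) t) * t ^ (2 * ν) := by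
    intro t ht
    have := MM_nonneg (ν + 1/2) t
    positivity
  have hcp := (cc_pos hν).le
  rw [JJ_eq β hν hx, JJ_eq β hν (hx.trans_le hxy)]
  constructor
  · exact mul_nonneg hcp (intervalIntegral.integral_nonneg hx.le fun t ht => hn t ht.1)
  · refine mul_le_mul_of_nonneg_left ?_ hcp
    rw [← intervalIntegral.integral_add_adjacent_intervals (q_int β hν 0 x) (q_int β hν x y)]
    have := intervalIntegral.integral_nonneg (μ := volume) hxy fun t ht => hn t (hx.le.trans ht.1)
    linarith

lemma JJ_zero (β : ℝ) {ν : ℝ} (hν : -(1/2) < ν) :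
    Tendsto (fun x : ℝ => x ^ (-(2 * ν + 1)) * JJ β ν x) (𝓝[>] 0)
      (𝓝 ((2 ^ ν)⁻¹ / (Real.Gamma (ν + 1) * (2 * ν + 1)))) := by
  have hM := MM_cont (a := ν + 1/2) (by linarith)
  have h := (J_zero_gen (p := 2 * ν) (by linarith)
    (q := fun t => Real.exp (β * t) * MM (ν + 1/2) t) (by fun_prop)).const_mul (cc ν)
  have hv : cc ν * (Real.exp (β * 0) * MM (ν + 1/2) 0 / (2 * ν + 1)) =
      (2 ^ ν)⁻¹ / (Real.Gamma (ν + 1) * (2 * ν + 1)) := by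
    rw [MM_zero (by linarith), show 1/2 + (ν + 1/2) = ν + 1 by ring, cc]
    have h1 := Real.Gamma_pos_of_pos (by linarith : 0 < ν + 1/2)
    have h2 := Real.Gamma_pos_of_pos (by linarith : 0 < ν + 1)
    have h3 := Real.sqrt_pos.2 Real.pi_pos
    have h4 : 0 < 2 * ν + 1 := by linarith
    simp only [mul_zero, Real.exp_zero, one_mul]
    generalize Real.Gamma (ν + 1/2) = G at h1 ⊢
    field_simp
  rw [hv] at h
  refine h.congr' ?_
  filter_upwards [self_mem_nhdsWithin] with x hx
  rw [JJ_eq β hν hx]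
  ring

lemma JJ_top {β ν : ℝ} (hβ : -1 < β) (hν : -(1/2) < ν) :
    Tendsto (fun x : ℝ => x ^ (-(ν - 1/2)) * Real.exp (-((1 + β) * x)) * JJ β ν x) atTop
      (𝓝 ((√(2 * π))⁻¹ / (1 + β))) := by
  have ha : 0 < ν + 1/2 := by linarith
  have hM := MM_cont ha
  obtain ⟨C, hC0, hC⟩ := MM_bdd ha
  have hm : Measurable (fun t : ℝ => t ^ (ν + 1/2) * (MM (ν + 1/2) t * Real.exp (-t))) := by
    have := hM.measurable
    fun_prop
  have h := (J_top_gen (p := ν - 1/2) (b := 1 + β) (by linarith) (by linarith) hm (C := C)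
    (fun t ht => by
      rw [abs_of_nonneg]
      · exact hC t ht
      · have := MM_nonneg (ν + 1/2) t
        positivity) (MM_asymp ha)).const_mul (cc ν)
  have hv : cc ν * (2 ^ (ν + 1/2 - 1) * Real.Gamma (ν + 1/2) / (1 + β)) = (√(2 * π))⁻¹ / (1 + β) := by
    have h1 := Real.Gamma_pos_of_pos ha
    have h3 := Real.sqrt_pos.2 Real.pi_pos
    have h4 : 0 < 1 + β := by linarith
    have h5 : (2:ℝ) ^ (ν + 1/2 - 1) = 2 ^ ν * (√2)⁻¹ := by
      rw [Real.sqrt_eq_rpow, ← Real.rpow_neg (by norm_num), ← Real.rpow_add (by norm_num)]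
      congr 1; ring
    have h6 : 0 < √(2:ℝ) := by positivity
    rw [h5, cc, Real.sqrt_mul (by norm_num)]
    have : (0:ℝ) < 2 ^ ν := by positivity
    generalize Real.Gamma (ν + 1/2) = G at h1 ⊢
    field_simp
  rw [hv] at h
  refine h.congr' ?_
  filter_upwards [eventually_gt_atTop 0] with x hx
  rw [JJ_eq β hν hx]
  have : ∫ t in (0:ℝ)..x, Real.exp ((1 + β) * t) * t ^ (ν - 1/2) *
        (t ^ (ν + 1/2) * (MM (ν + 1/2) t * Real.exp (-t))) =
      ∫ t in (0:ℝ)..x, (Real.exp (β * t) * MM (ν + 1/2) t) * t ^ (2 * ν) := by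
    rw [intervalIntegral.integral_of_le hx.le, intervalIntegral.integral_of_le hx.le]
    refine setIntegral_congr_fun measurableSet_Ioc fun t ht => ?_
    have e1 : t ^ (2 * ν) = t ^ (ν - 1/2) * t ^ (ν + 1/2) := by
      rw [← Real.rpow_add ht.1]; congr 1; ring
    have e2 : Real.exp (β * t) = Real.exp ((1 + β) * t) * Real.exp (-t) := by
      rw [← Real.exp_add]; congr 1; ring
    simp only [e1, e2]
    ring
  rw [this]
  ring

/-- The function whose supremum is taken. -/
noncomputable def FF (β ν x : ℝ) : ℝ :=
  (Real.exp (-β * x) * besselK (ν + 2) x / x ^ (ν - 1)) * JJ β ν x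

lemma FF_zero (β : ℝ) {ν : ℝ} (hν : -(1/2) < ν) :
    Tendsto (FF β ν) (𝓝[>] 0) (𝓝 (2 * (ν + 1) / (2 * ν + 1))) := by
  have h0 : Tendsto (fun x : ℝ => Real.exp (-β * x)) (𝓝[>] 0) (𝓝 1) := by
    have hc : Continuous (fun x : ℝ => Real.exp (-β * x)) := by fun_prop
    have := (hc.tendsto 0).mono_left (nhdsWithin_le_nhds (s := Ioi 0))
    simpa using this
  have h := (h0.mul (K_zero (μ := ν + 2) (by linarith))).mul (JJ_zero β hν)
  have hv : 1 * (2 ^ (ν + 2 - 1) * Real.Gamma (ν + 2)) *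
      ((2 ^ ν)⁻¹ / (Real.Gamma (ν + 1) * (2 * ν + 1))) = 2 * (ν + 1) / (2 * ν + 1) := by
    have h2 := Real.Gamma_pos_of_pos (by linarith : 0 < ν + 1)
    have e1 : Real.Gamma (ν + 2) = (ν + 1) * Real.Gamma (ν + 1) := by
      rw [← Real.Gamma_add_one (by linarith)]; congr 1; ring
    have e2 : (2:ℝ) ^ (ν + 2 - 1) = 2 ^ ν * 2 := by
      rw [← Real.rpow_add_one (by norm_num)]; congr 1; ring
    have h4 : 0 < 2 * ν + 1 := by linarith
    rw [e1, e2]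
    have : (0:ℝ) < 2 ^ ν := by positivity
    field_simp
  rw [hv] at h
  refine h.congr' ?_
  filter_upwards [self_mem_nhdsWithin] with x hx
  have hx' : 0 < x := hx
  have e : x ^ (ν + 2) * x ^ (-(2 * ν + 1)) = (x ^ (ν - 1))⁻¹ := by
    rw [← Real.rpow_add hx', ← Real.rpow_neg hx'.le]; congr 1; ring
  unfold FF
  rw [div_eq_mul_inv, ← e]
  ring

lemma FF_top {β ν : ℝ} (hβ : -1 < β) (hν : -(1/2) < ν) :
    Tendsto (FF β ν) atTop (𝓝 (1 / (2 * (1 + β)))) := by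
  have h := (K_top (ν + 2)).mul (JJ_top hβ hν)
  have hv : √(π / 2) * ((√(2 * π))⁻¹ / (1 + β)) = 1 / (2 * (1 + β)) := by
    have e : 2 * π = 2 ^ 2 * (π / 2) := by ring
    have h3 : 0 < √(π / 2) := Real.sqrt_pos.2 (by positivity)
    have h4 : 0 < 1 + β := by linarith
    rw [e, Real.sqrt_mul (by norm_num), Real.sqrt_sq (by norm_num)]
    field_simp
  rw [hv] at h
  refine h.congr' ?_
  filter_upwards [eventually_gt_atTop 0] with x hx
  have e : √x * x ^ (-(ν - 1/2)) = (x ^ (ν - 1))⁻¹ := by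
    rw [Real.sqrt_eq_rpow, ← Real.rpow_add hx, ← Real.rpow_neg hx.le]; congr 1; ring
  have e2 : Real.exp (-β * x) = Real.exp x * Real.exp (-((1 + β) * x)) := by
    rw [← Real.exp_add]; congr 1; ring
  unfold FF
  rw [div_eq_mul_inv _ (x ^ (ν - 1)), ← e, e2]
  ring

lemma FF_bdd {β ν : ℝ} (hβ : -1 < β) (hν : -(1/2) < ν) : BddAbove (FF β ν '' Ioi 0) := by
  have h0 := (FF_zero β hν).eventually_le_const (lt_add_one _)
  obtain ⟨δ, hδ, h1⟩ := (mem_nhdsGT_iff_exists_Ioo_subset).1 h0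
  obtain ⟨T, hT⟩ := eventually_atTop.1 ((FF_top hβ hν).eventually_le_const (lt_add_one _))
  have hδ' : 0 < δ := hδ
  have hcont : ContinuousOn (fun x : ℝ => Real.exp (-β * x) * (x ^ (ν - 1))⁻¹) (Icc δ (max δ T)) := by
    refine ContinuousOn.mul (Continuous.continuousOn (by fun_prop)) ?_
    refine ContinuousOn.inv₀ ?_ ?_
    · exact continuousOn_id.rpow_const fun x hx => Or.inl (hδ'.trans_le hx.1).ne'
    · intro x hx
      exact (Real.rpow_pos_of_pos (hδ'.trans_le hx.1) _).ne'
  obtain ⟨B, hB⟩ := (isCompact_Icc.image_of_continuousOn hcont).bddAbove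
  refine ⟨max (2 * (ν + 1) / (2 * ν + 1) + 1) (max (1 / (2 * (1 + β)) + 1)
    (B * besselK (ν + 2) δ * JJ β ν (max δ T))), ?_⟩
  rintro _ ⟨x, hx, rfl⟩
  have hx' : 0 < x := hx
  rcases lt_or_ge x δ with h | h
  · exact le_max_of_le_left (h1 ⟨hx', h⟩)
  · refine le_max_of_le_right ?_
    rcases le_total T x with h2 | h2
    · exact le_max_of_le_left (hT x h2)
    · refine le_max_of_le_right ?_
      have hxm : x ≤ max δ T := le_max_of_le_right h2
      have hb : Real.exp (-β * x) * (x ^ (ν - 1))⁻¹ ≤ B := hB ⟨x, ⟨h, hxm⟩, rfl⟩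
      have hp : 0 ≤ Real.exp (-β * x) * (x ^ (ν - 1))⁻¹ := by positivity
      obtain ⟨j1, j2⟩ := JJ_mono β hν hx' hxm
      have k1 := K_anti (ν + 2) hδ' h
      have k0 := K_nonneg (ν + 2) x
      have k2 := K_nonneg (ν + 2) δ
      have e : FF β ν x = Real.exp (-β * x) * (x ^ (ν - 1))⁻¹ * besselK (ν + 2) x * JJ β ν x := by
        unfold FF; ring
      rw [e]
      have hB0 := hp.trans hb
      gcongr

end Helpers5

theorem stmt_12 (β ν : ℝ) (hβ0 : -1 < β) (hβ1 : β < 0) (hν : -(1/2) < ν) :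
    sSup ((fun x : ℝ => (Real.exp (-β * x) * besselK (ν + 2) x / x ^ (ν - 1)) *
        ∫ t in (0 : ℝ)..x, Real.exp (β * t) * t ^ ν * besselI ν t) '' Set.Ioi 0) ≥
      max (1 / (2 * (1 + β))) (2 * (ν + 1) / (2 * ν + 1)) := by
  change sSup (FF β ν '' Set.Ioi 0) ≥ _
  have hb := FF_bdd hβ0 hν
  refine max_le ?_ ?_
  · refine le_of_tendsto (FF_top hβ0 hν) ?_
    filter_upwards [Filter.eventually_gt_atTop 0] with x hx
    exact le_csSup hb ⟨x, hx, rfl⟩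
  · refine le_of_tendsto (FF_zero β hν) ?_
    filter_upwards [self_mem_nhdsWithin] with x hx
    exact le_csSup hb ⟨x, hx, rfl⟩
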